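/- Let $k\ge 1$ and let $M_1,\ldots,M_k$ be endomorphisms of nonzero finite-dimensional complex vector spaces $E_1,\ldots,E_k$. For each $l$, let $\lambda_{l1},\ldots,\lambda_{le_l}$ be the distinct eigenvalues of $M_l$ and let $r_{lm}$ be the multiplicity of $\lambda_{lm}$ as a root of the minimal polynomial of $M_l$. Let $Q,P_1,P_2\in\mathbb{C}[x_1,\ldots,x_k]$ be such that for every tuple $(m_1,\ldots,m_k)$ with $1\le m_l\le e_l$ and every tuple $(j_1,\ldots,j_k)$ with $0\le j_l< r_{lm_l}$, $\left[\prod_{l=1}^k\partial_l^{j_l}\right]Q(\lambda_{1m_1},\ldots,\lambda_{km_k}) = \left[\prod_{l=1}^k\partial_l^{j_l}\right](P_1P_2)(\lambda_{1m_1},\ldots,\lambda_{km_k})$. Then $Q^{\otimes}(M_1,\ldots,M_k) = P_1^{\otimes}(M_1,\ldots,M_k)\circ P_2^{\otimes}(M_1,\ldots,M_k)$ as endomorphisms of $E_1\otimes\cdots\otimes E_k$. -/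

import Mathlib

open scoped TensorProduct
open MvPolynomial

/-- `P^⊗(M₁,…,M_k) := ∑_α c_α M₁^{α₁} ⊗ ⋯ ⊗ M_k^{α_k}`, an endomorphism of `E₁ ⊗ ⋯ ⊗ E_k`. -/
noncomputable def tensorEval {k : ℕ} {E : Fin k → Type*} [∀ l, AddCommGroup (E l)]
    [∀ l, Module ℂ (E l)] (P : MvPolynomial (Fin k) ℂ) (M : ∀ l, Module.End ℂ (E l)) :
    Module.End ℂ (⨂[ℂ] l, E l) :=
  ∑ α ∈ P.support, P.coeff α • PiTensorProduct.map (fun l => (M l) ^ (α l))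

/-- The composite partial-derivative operator `∏_l ∂_l^{a l}`. -/
noncomputable def pderivComp {k : ℕ} (a : Fin k → ℕ) :
    Module.End ℂ (MvPolynomial (Fin k) ℂ) :=
  (List.ofFn fun l : Fin k =>
    (((pderiv l).toLinearMap : Module.End ℂ (MvPolynomial (Fin k) ℂ)) ^ a l)).prod

/-!
Since `P ↦ P^⊗(M)` is an algebra homomorphism, it suffices to show that it kills `P = Q - P₁ P₂`.
It sends `P` to `P(x + c)^⊗(M - c)`. The pure tensors whose `l`-th factor is killed by
`(M_l - c_l) ^ r_l`, with `c` ranging over the tuples of eigenvalues, span `E₁ ⊗ ⋯ ⊗ E_k`. On such a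
tensor a monomial `x ^ j` of `P(x + c)` vanishes as soon as some `j_l ≥ r_l`, and for all other `j`
its coefficient `(∏_l ∂_l^{j_l} / j_l!) P (c)` is zero by assumption.
-/

section Taylor

variable {σ R : Type*} [CommSemiring R]

/-- The Taylor expansion `P ↦ P(x + c)` of multivariate polynomials at the point `c`, the analogue
of `Polynomial.taylor`. The coefficient of `x ^ j` in `mvTaylor c P` plays the role of
`(∏_l ∂_l^{j l} / (j l)!) P (c)` and makes sense over every commutative semiring. -/
noncomputable def mvTaylor (c : σ → R) : MvPolynomial σ R →ₐ[R] MvPolynomial σ R :=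
  aeval fun i => X i + C (c i)

theorem coeff_zero_mvTaylor (c : σ → R) (P : MvPolynomial σ R) :
    coeff 0 (mvTaylor c P) = eval c P := by
  have h : (aeval (0 : σ → R)).comp (mvTaylor c) = aeval c := by
    ext i
    simp [mvTaylor]
  simpa [constantCoeff_eq, aeval_eq_eval] using DFunLike.congr_fun h P

theorem pderiv_mvTaylor (c : σ → R) (i : σ) (P : MvPolynomial σ R) :
    pderiv i (mvTaylor c P) = mvTaylor c (pderiv i P) := by
  induction P using MvPolynomial.induction_on with
  | C a => simp [mvTaylor]
  | add P Q hP hQ => simp only [map_add, hP, hQ]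
  | mul_X P l hP =>
    have hX : pderiv i (mvTaylor c (X l)) = mvTaylor c (pderiv i (X l)) := by
      obtain rfl | hl := eq_or_ne l i
      · simp [mvTaylor]
      · simp [mvTaylor, pderiv_X_of_ne hl]
    simp only [pderiv_mul, map_mul, map_add, hP, hX]

theorem coeff_pderiv_pow (i : σ) (n : ℕ) (P : MvPolynomial σ R) (s : σ →₀ ℕ) :
    coeff s (((pderiv i).toLinearMap ^ n : Module.End R (MvPolynomial σ R)) P) =
      coeff (s + Finsupp.single i n) P * (s i + 1).ascFactorial n := by
  induction n generalizing P with
  | zero => simp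
  | succ n ih =>
    rw [pow_succ, Module.End.mul_apply, ih, Derivation.coeFn_coe, coeff_pderiv, add_assoc,
      ← Finsupp.single_add, Nat.ascFactorial_succ]
    simp only [Finsupp.add_apply, Finsupp.single_eq_same]
    push_cast
    ring

theorem coeff_list_prod_pderiv_pow (j : σ → ℕ) {L : List σ} (hL : L.Nodup) (P : MvPolynomial σ R)
    (s : σ →₀ ℕ) :
    coeff s ((L.map fun i =>
        ((pderiv i).toLinearMap ^ j i : Module.End R (MvPolynomial σ R))).prod P) =
      coeff (s + (L.map fun i => Finsupp.single i (j i)).sum) P *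
        (L.map fun i => ((s i + 1).ascFactorial (j i) : R)).prod := by
  induction L generalizing s with
  | nil => simp
  | cons i L ih =>
    obtain ⟨hi, hL⟩ := List.nodup_cons.mp hL
    have hs : ∀ l ∈ L, (s + Finsupp.single i (j i)) l = s l := fun l hl => by
      simp [Finsupp.single_eq_of_ne (ne_of_mem_of_not_mem hl hi)]
    have hfactor : (L.map fun l => (((s + Finsupp.single i (j i)) l + 1).ascFactorial (j l) : R)) =
        L.map fun l => ((s l + 1).ascFactorial (j l) : R) :=
      List.map_congr_left fun l hl => by rw [hs l hl]
    simp only [List.map_cons, List.prod_cons, List.sum_cons, Module.End.mul_apply]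
    rw [coeff_pderiv_pow, ih hL, hfactor, add_assoc, mul_assoc, mul_comm (List.prod _)]

end Taylor

section PderivComp

variable {k : ℕ}

theorem coeff_zero_pderivComp (j : Fin k →₀ ℕ) (P : MvPolynomial (Fin k) ℂ) :
    coeff 0 (pderivComp j P) = coeff j P * ∏ l, ((j l).factorial : ℂ) := by
  rw [pderivComp, List.ofFn_eq_map, coeff_list_prod_pderiv_pow _ (List.nodup_finRange k),
    ← List.ofFn_eq_map, ← List.ofFn_eq_map, List.prod_ofFn, List.sum_ofFn,
    Finsupp.univ_sum_single]
  simp [Nat.one_ascFactorial]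

theorem pderivComp_mvTaylor (c : Fin k → ℂ) (j : Fin k → ℕ) (P : MvPolynomial (Fin k) ℂ) :
    pderivComp j (mvTaylor c P) = mvTaylor c (pderivComp j P) := by
  have h : Commute (pderivComp j) (mvTaylor c).toLinearMap := by
    refine Commute.list_prod_left _ _ fun D hD => ?_
    obtain ⟨l, rfl⟩ := List.mem_ofFn.mp hD
    exact Commute.pow_left (LinearMap.ext (pderiv_mvTaylor c l)) (j l)
  exact LinearMap.congr_fun h P

theorem eval_pderivComp (c : Fin k → ℂ) (j : Fin k →₀ ℕ) (P : MvPolynomial (Fin k) ℂ) :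
    eval c (pderivComp j P) = coeff j (mvTaylor c P) * ∏ l, ((j l).factorial : ℂ) := by
  rw [← coeff_zero_mvTaylor, ← pderivComp_mvTaylor, coeff_zero_pderivComp]

theorem coeff_mvTaylor_eq_iff_eval_pderivComp_eq (c : Fin k → ℂ) (j : Fin k →₀ ℕ)
    (P Q : MvPolynomial (Fin k) ℂ) :
    coeff j (mvTaylor c P) = coeff j (mvTaylor c Q) ↔
      eval c (pderivComp j P) = eval c (pderivComp j Q) := by
  have hfact : ∏ l, ((j l).factorial : ℂ) ≠ 0 :=
    Finset.prod_ne_zero_iff.mpr fun l _ => Nat.cast_ne_zero.mpr (j l).factorial_ne_zero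
  rw [eval_pderivComp, eval_pderivComp, mul_left_inj' hfact]

end PderivComp

section GenEigenspace

open Polynomial in
theorem iSup_ker_aeval_eq_ker_aeval_prod_of_coprime {R V κ : Type*} [CommRing R] [AddCommGroup V]
    [Module R V] (f : Module.End R V) (s : Finset κ) (p : κ → R[X])
    (hp : (s : Set κ).Pairwise (Function.onFun IsCoprime p)) :
    ⨆ i ∈ s, (aeval f (p i)).ker = (aeval f (∏ i ∈ s, p i)).ker := by
  classical
  induction s using Finset.induction_on with
  | empty => simp [Module.End.one_eq_id]
  | insert a s ha ih =>
    rw [Finset.coe_insert, Set.pairwise_insert_of_notMem (by simpa using ha)] at hp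
    have hcop : IsCoprime (p a) (∏ i ∈ s, p i) := IsCoprime.prod_right fun i hi => (hp.2 i hi).1
    rw [Finset.iSup_insert, Finset.prod_insert ha, ih hp.1,
      sup_ker_aeval_eq_ker_aeval_mul_of_coprime f hcop]

theorem ker_aeval_X_sub_C_pow {R V : Type*} [CommRing R] [AddCommGroup V] [Module R V]
    (f : Module.End R V) (a : R) (n : ℕ) :
    (Polynomial.aeval f ((Polynomial.X - Polynomial.C a) ^ n)).ker = f.genEigenspace a n := by
  simp [Module.End.genEigenspace_nat, Algebra.algebraMap_eq_smul_one]

variable {K V : Type*} [Field K] [AddCommGroup V] [Module K V]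

theorem iSup_genEigenspace_rootMultiplicity_minpoly_eq_top {f : Module.End K V}
    (hf : IsIntegral K f) (hsplits : (minpoly K f).Splits) :
    ⨆ a : K, f.genEigenspace a ((minpoly K f).rootMultiplicity a) = ⊤ := by
  classical
  let s := (minpoly K f).roots.toFinset
  let p (a : K) := (Polynomial.X - Polynomial.C a) ^ (minpoly K f).rootMultiplicity a
  have hprod : ∏ a ∈ s, p a = minpoly K f := by
    rw [← Polynomial.prod_multiset_root_eq_finset_root,
      ← hsplits.eq_prod_roots_of_monic (minpoly.monic hf)]
  have hcoprime : (s : Set K).Pairwise (Function.onFun IsCoprime p) := fun a _ b _ hab =>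
    (Polynomial.pairwise_coprime_X_sub_C Function.injective_id hab).pow
  have hs : ⨆ a ∈ s, f.genEigenspace a ((minpoly K f).rootMultiplicity a) = ⊤ := by
    simp only [← ker_aeval_X_sub_C_pow]
    rw [iSup_ker_aeval_eq_ker_aeval_prod_of_coprime f s p hcoprime, hprod, minpoly.aeval,
      LinearMap.ker_zero]
  exact eq_top_mono (iSup_mono fun a => iSup_le fun _ => le_rfl) hs

theorem iSup_spectrum_genEigenspace_rootMultiplicity_minpoly_eq_top [IsAlgClosed K]
    [FiniteDimensional K V] (f : Module.End K V) :
    ⨆ a ∈ spectrum K f, f.genEigenspace a ((minpoly K f).rootMultiplicity a) = ⊤ := by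
  rw [← iSup_genEigenspace_rootMultiplicity_minpoly_eq_top (Algebra.IsIntegral.isIntegral f)
    (IsAlgClosed.splits _)]
  refine iSup_congr fun a => ?_
  by_cases ha : a ∈ spectrum K f
  · simp [ha]
  · have hroot : ¬ (minpoly K f).IsRoot a := by
      rwa [← Module.End.hasEigenvalue_iff_isRoot, Module.End.hasEigenvalue_iff_mem_spectrum]
    simp [ha, Polynomial.rootMultiplicity_eq_zero hroot]

end GenEigenspace

section TensorAeval

variable {ι R : Type*} [CommSemiring R] {E : ι → Type*} [∀ l, AddCommMonoid (E l)]
  [∀ l, Module R (E l)]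

/-- The evaluation `P ↦ P^⊗(M)` as an algebra homomorphism. It is lifted from the monoid of
exponents because `MvPolynomial.aeval` requires a commutative target. -/
noncomputable def tensorAeval (M : ∀ l, Module.End R (E l)) :
    MvPolynomial ι R →ₐ[R] Module.End R (⨂[R] l, E l) :=
  AddMonoidAlgebra.lift R _ (ι →₀ ℕ)
    { toFun := fun α => PiTensorProduct.map fun l => M l ^ α.toAdd l
      map_one' := by simp
      map_mul' := fun α β => by
        simp only [toAdd_mul, Finsupp.add_apply, pow_add]
        exact PiTensorProduct.map_mul _ _ }

theorem tensorAeval_eq_sum (M : ∀ l, Module.End R (E l)) (P : MvPolynomial ι R) :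
    tensorAeval M P =
      ∑ α ∈ P.support, P.coeff α • PiTensorProduct.map fun l => M l ^ α l :=
  AddMonoidAlgebra.lift_apply _ _

theorem tensorAeval_X [DecidableEq ι] (M : ∀ l, Module.End R (E l)) (l : ι) :
    tensorAeval M (X l) =
      PiTensorProduct.map (Function.update (1 : ∀ i, Module.End R (E i)) l (M l)) := by
  have hpow : (fun i => M i ^ Finsupp.single l 1 i) =
      Function.update (1 : ∀ i, Module.End R (E i)) l (M l) := by
    ext1 i
    obtain rfl | hi := eq_or_ne i l
    · simp
    · simp [hi]
  rw [← hpow]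
  exact (AddMonoidAlgebra.lift_single _ _ _).trans (one_smul _ _)

end TensorAeval

section Vanishing

variable {ι R : Type*} [CommRing R] {E : ι → Type*} [∀ l, AddCommGroup (E l)] [∀ l, Module R (E l)]

theorem tensorAeval_mvTaylor (M : ∀ l, Module.End R (E l)) (c : ι → R) (P : MvPolynomial ι R) :
    tensorAeval (fun l => M l - c l • 1) (mvTaylor c P) = tensorAeval M P := by
  classical
  suffices (tensorAeval fun l => M l - c l • 1).comp (mvTaylor c) = tensorAeval M from
    DFunLike.congr_fun this P
  ext1 l
  have hC : c l • 1 =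
      PiTensorProduct.map (Function.update (1 : ∀ i, Module.End R (E i)) l (c l • 1)) := by
    rw [PiTensorProduct.map_update_smul, ← Pi.one_apply (M := fun i => Module.End R (E i)) l,
      Function.update_eq_self]
    exact congrArg _ PiTensorProduct.map_one.symm
  simp only [AlgHom.comp_apply, mvTaylor, aeval_X, map_add, tensorAeval_X]
  rw [← algebraMap_eq, AlgHom.commutes, Algebra.algebraMap_eq_smul_one, hC,
    ← PiTensorProduct.map_update_add, sub_add_cancel]

theorem tensorAeval_tprod_eq_zero_of_mem_genEigenspace {M : ∀ l, Module.End R (E l)}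
    {c : ι → R} {r : ι → ℕ} {P : MvPolynomial ι R}
    (hP : ∀ j : ι →₀ ℕ, (∀ l, j l < r l) → coeff j (mvTaylor c P) = 0)
    {x : ∀ l, E l} (hx : ∀ l, x l ∈ (M l).genEigenspace (c l) (r l)) :
    tensorAeval M P (PiTensorProduct.tprod R x) = 0 := by
  simp only [Module.End.mem_genEigenspace_nat, LinearMap.mem_ker] at hx
  rw [← tensorAeval_mvTaylor M c, tensorAeval_eq_sum, LinearMap.sum_apply]
  refine Finset.sum_eq_zero fun j _ => ?_
  rw [LinearMap.smul_apply, PiTensorProduct.map_tprod]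
  by_cases hj : ∀ l, j l < r l
  · rw [hP j hj, zero_smul]
  · push Not at hj
    obtain ⟨l, hl⟩ := hj
    rw [MultilinearMap.map_coord_zero _ l (Module.End.pow_map_zero_of_le hl (hx l)), smul_zero]

theorem tensorAeval_eq_zero_of_coeff_mvTaylor_eq_zero [Finite ι] {κ : ι → Type*}
    {M : ∀ l, Module.End R (E l)} {lam : ∀ l, κ l → R} {r : ∀ l, κ l → ℕ}
    (hM : ∀ l, ⨆ m, (M l).genEigenspace (lam l m) (r l m) = ⊤) {P : MvPolynomial ι R}
    (hP : ∀ (m : ∀ l, κ l) (j : ι →₀ ℕ), (∀ l, j l < r l (m l)) →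
      coeff j (mvTaylor (fun l => lam l (m l)) P) = 0) :
    tensorAeval M P = 0 := by
  let v ⦃l : ι⦄ (y : Σ m, (M l).genEigenspace (lam l m) (r l m)) : E l := y.2
  have hv : ∀ l, Submodule.span R (Set.range (@v l)) = ⊤ := fun l => by
    rw [← hM l, Submodule.iSup_eq_span, Set.range_sigma_eq_iUnion_range]
    simp [v]
  refine PiTensorProduct.ext_of_span_eq_top hv fun y => ?_
  exact tensorAeval_tprod_eq_zero_of_mem_genEigenspace (hP fun l => (y l).1) fun l => (y l).2.2

theorem stmt6_general [Finite ι] {κ : ι → Type*} (M : ∀ l, Module.End R (E l))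
    (lam : ∀ l, κ l → R) (r : ∀ l, κ l → ℕ)
    (hM : ∀ l, ⨆ m, (M l).genEigenspace (lam l m) (r l m) = ⊤) (Q P₁ P₂ : MvPolynomial ι R)
    (hQ : ∀ (m : ∀ l, κ l) (j : ι →₀ ℕ), (∀ l, j l < r l (m l)) →
      coeff j (mvTaylor (fun l => lam l (m l)) Q) =
        coeff j (mvTaylor (fun l => lam l (m l)) (P₁ * P₂))) :
    tensorAeval M Q = tensorAeval M P₁ * tensorAeval M P₂ := by
  rw [← map_mul, ← sub_eq_zero, ← map_sub]
  refine tensorAeval_eq_zero_of_coeff_mvTaylor_eq_zero hM fun m j hj => ?_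
  rw [map_sub, coeff_sub, hQ m j hj, sub_self]

end Vanishing

theorem stmt6 (k : ℕ) (hk : 1 ≤ k) (E : Fin k → Type*)
    [∀ l, AddCommGroup (E l)] [∀ l, Module ℂ (E l)]
    [∀ l, FiniteDimensional ℂ (E l)] [∀ l, Nontrivial (E l)]
    (M : ∀ l, Module.End ℂ (E l))
    (e : Fin k → ℕ) (lam : ∀ l, Fin (e l) → ℂ)
    (hinj : ∀ l, Function.Injective (lam l))
    (hspec : ∀ l, spectrum ℂ (M l) = Set.range (lam l))
    (r : ∀ l, Fin (e l) → ℕ)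
    (hr : ∀ l m, r l m = (minpoly ℂ (M l)).rootMultiplicity (lam l m))
    (Q P₁ P₂ : MvPolynomial (Fin k) ℂ)
    (hQ : ∀ (m : ∀ l, Fin (e l)) (jj : Fin k → ℕ), (∀ l, jj l < r l (m l)) →
      MvPolynomial.eval (fun l => lam l (m l)) (pderivComp jj Q) =
        MvPolynomial.eval (fun l => lam l (m l)) (pderivComp jj (P₁ * P₂))) :
    tensorEval Q M = tensorEval P₁ M * tensorEval P₂ M := by
  have hM : ∀ l, ⨆ m, (M l).genEigenspace (lam l m) (r l m) = ⊤ := fun l => by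
    simpa only [hspec, iSup_range, ← hr] using
      iSup_spectrum_genEigenspace_rootMultiplicity_minpoly_eq_top (M l)
  simp only [tensorEval, ← tensorAeval_eq_sum]
  exact stmt6_general M lam r hM Q P₁ P₂ fun m j hj =>
    (coeff_mvTaylor_eq_iff_eval_pderivComp_eq _ j Q (P₁ * P₂)).mpr (hQ m j hj)
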